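/- arXiv:math/9704231 — 6 statements merged into one kernel-verified Lean document; each statement's English description precedes it below -/
import Mathlib

section
/- The sequence $(s_k)_{k\in\mathbb{Z}}$ satisfies $\lim_{k\to\infty} s_k = b$ and $\lim_{k\to-\infty} s_k = a$. -/
open Filter Topology

/-!
If the increasing sequence had a limit below the barrier `b`, it would never be stopped, so its
increments `t (n + 1) - t n = f (t n)` would tend to `0`. Lower semicontinuity of `f` at the limit
would then contradict positivity there. The decreasing half follows by reflecting `x ↦ -x`.
-/

/-- The orbit of the iteration `x ↦ x + f x`, stopped at the barrier `b`. The minimum is taken in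
`EReal` so that `b = ⊤` encodes the absence of a barrier. -/
def IsAscendingOrbit (f : ℝ → ℝ) (b : EReal) (t : ℕ → ℝ) : Prop :=
  ∀ n, (t (n + 1) : EReal) = min ((t n + f (t n) : ℝ) : EReal) b

/-- The orbit of the iteration `x ↦ x - f x`, stopped at the barrier `a`; as for
`IsAscendingOrbit`, the barrier is extended-real and may be `⊥`. -/
def IsDescendingOrbit (f : ℝ → ℝ) (a : EReal) (t : ℕ → ℝ) : Prop :=
  ∀ n, (t (n + 1) : EReal) = max ((t n - f (t n) : ℝ) : EReal) a

namespace IsAscendingOrbit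

variable {f : ℝ → ℝ} {b : EReal} {t : ℕ → ℝ}

theorem of_forall_imp
    (h : ∀ n, (b ≤ ((t n + f (t n) : ℝ) : EReal) → (t (n + 1) : EReal) = b) ∧
      (((t n + f (t n) : ℝ) : EReal) < b → t (n + 1) = t n + f (t n))) :
    IsAscendingOrbit f b t := fun n ↦ by
  rcases le_or_gt b ((t n + f (t n) : ℝ) : EReal) with hn | hn
  · rw [(h n).1 hn, min_eq_right hn]
  · rw [(h n).2 hn, min_eq_left hn.le]

theorem le_barrier (ht : IsAscendingOrbit f b t) (h0 : (t 0 : EReal) ≤ b) (n : ℕ) :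
    (t n : EReal) ≤ b := by
  cases n with
  | zero => exact h0
  | succ n => exact (ht n).trans_le (min_le_right _ _)

theorem monotone (ht : IsAscendingOrbit f b t) (hf : ∀ x, 0 ≤ f x) (h0 : (t 0 : EReal) ≤ b) :
    Monotone t := by
  refine monotone_nat_of_le_succ fun n ↦ EReal.coe_le_coe_iff.1 ?_
  rw [ht n]
  exact le_min (EReal.coe_le_coe_iff.2 (le_add_of_nonneg_right (hf _))) (ht.le_barrier h0 n)

theorem succ_eq_of_lt (ht : IsAscendingOrbit f b t) {n : ℕ} (hn : (t (n + 1) : EReal) < b) :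
    t (n + 1) = t n + f (t n) := by
  have hstep : ((t n + f (t n) : ℝ) : EReal) < b := by simpa [ht n] using hn
  exact EReal.coe_injective ((ht n).trans (min_eq_left hstep.le))

theorem tendsto_step_zero (ht : IsAscendingOrbit f b t) {l : ℝ} (hl : Tendsto t atTop (𝓝 l))
    (hlb : (l : EReal) < b) : Tendsto (fun n ↦ f (t n)) atTop (𝓝 0) := by
  have hl' : Tendsto (fun n ↦ t (n + 1)) atTop (𝓝 l) := hl.comp (tendsto_add_atTop_nat 1)
  have hincr : Tendsto (fun n ↦ t (n + 1) - t n) atTop (𝓝 0) := by simpa using hl'.sub hl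
  refine hincr.congr' ?_
  filter_upwards [(EReal.tendsto_coe.2 hl').eventually_lt_const hlb] with n hn
  exact sub_eq_of_eq_add' (ht.succ_eq_of_lt hn)

theorem nonpos_of_tendsto (ht : IsAscendingOrbit f b t) {l : ℝ} (hl : Tendsto t atTop (𝓝 l))
    (hlb : (l : EReal) < b) {S : Set ℝ} (hS : ∀ᶠ n in atTop, t n ∈ S)
    (hf : LowerSemicontinuousWithinAt f S l) : f l ≤ 0 := by
  have hlS : Tendsto t atTop (𝓝[S] l) := tendsto_nhdsWithin_iff.2 ⟨hl, hS⟩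
  refine le_of_forall_lt fun y hy ↦ ?_
  obtain ⟨z, hyz, hz⟩ := exists_between hy
  have hz_le : ∀ᶠ n in atTop, z ≤ f (t n) := (hlS.eventually (hf z hz)).mono fun _ ↦ le_of_lt
  exact hyz.trans_le (ge_of_tendsto (ht.tendsto_step_zero hl hlb) hz_le)

theorem tendsto_barrier (ht : IsAscendingOrbit f b t) (hf : ∀ x, 0 ≤ f x)
    (h0 : (t 0 : EReal) ≤ b) (hpos : ∀ x, t 0 ≤ x → (x : EReal) < b → 0 < f x)
    (hlsc : LowerSemicontinuousOn f {x | t 0 ≤ x ∧ (x : EReal) < b}) :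
    Tendsto (fun n ↦ (t n : EReal)) atTop (𝓝 b) := by
  have hmono : Monotone t := ht.monotone hf h0
  have hlim : Tendsto (fun n ↦ (t n : EReal)) atTop (𝓝 (⨆ n, (t n : EReal))) :=
    tendsto_atTop_iSup (EReal.coe_strictMono.monotone.comp hmono)
  have hle : ∀ n, (t n : EReal) ≤ ⨆ n, (t n : EReal) := le_iSup fun n ↦ (t n : EReal)
  have hsup_le : ⨆ n, (t n : EReal) ≤ b := iSup_le (ht.le_barrier h0)
  generalize ⨆ n, (t n : EReal) = L at hlim hle hsup_le
  obtain rfl | hlt := hsup_le.eq_or_lt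
  · exact hlim
  lift L to ℝ using ⟨hlt.ne_top, ((EReal.bot_lt_coe _).trans_le (hle 0)).ne'⟩
  have h0L : t 0 ≤ L := EReal.coe_le_coe_iff.1 (hle 0)
  have hmem : ∀ᶠ n in atTop, t n ∈ {x | t 0 ≤ x ∧ (x : EReal) < b} :=
    .of_forall fun n ↦ ⟨hmono n.zero_le, (hle n).trans_lt hlt⟩
  exact absurd (hpos L h0L hlt)
    (ht.nonpos_of_tendsto (EReal.tendsto_coe.1 hlim) hlt hmem (hlsc L ⟨h0L, hlt⟩)).not_gt

end IsAscendingOrbit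

namespace IsDescendingOrbit

variable {f : ℝ → ℝ} {a : EReal} {t : ℕ → ℝ}

theorem of_forall_imp
    (h : ∀ n, (((t n - f (t n) : ℝ) : EReal) ≤ a → (t (n + 1) : EReal) = a) ∧
      (a < ((t n - f (t n) : ℝ) : EReal) → t (n + 1) = t n - f (t n))) :
    IsDescendingOrbit f a t := fun n ↦ by
  rcases le_or_gt ((t n - f (t n) : ℝ) : EReal) a with hn | hn
  · rw [(h n).1 hn, max_eq_right hn]
  · rw [(h n).2 hn, max_eq_left hn.le]

theorem isAscendingOrbit_neg (ht : IsDescendingOrbit f a t) :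
    IsAscendingOrbit (fun x ↦ f (-x)) (-a) (-t) := fun n ↦ by
  have hstep : (-t) n + f (-(-t) n) = -(t n - f (t n)) := by
    simp only [Pi.neg_apply, neg_neg]; ring
  rw [hstep, Pi.neg_apply, EReal.coe_neg, EReal.coe_neg, ht n, EReal.min_neg_neg]

theorem tendsto_barrier (ht : IsDescendingOrbit f a t) (hf : ∀ x, 0 ≤ f x)
    (h0 : a ≤ (t 0 : EReal)) (hpos : ∀ x, x ≤ t 0 → a < (x : EReal) → 0 < f x)
    (hlsc : LowerSemicontinuousOn f {x | x ≤ t 0 ∧ a < (x : EReal)}) :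
    Tendsto (fun n ↦ (t n : EReal)) atTop (𝓝 a) := by
  have hreflect : ∀ {x : ℝ}, (-t) 0 ≤ x → (x : EReal) < -a → -x ≤ t 0 ∧ a < ((-x : ℝ) : EReal) :=
    fun hx hxa ↦ ⟨neg_le.1 hx, by simpa using EReal.lt_neg_comm.1 hxa⟩
  have hneg : Tendsto (fun n ↦ ((-t) n : EReal)) atTop (𝓝 (-a)) :=
    ht.isAscendingOrbit_neg.tendsto_barrier (fun x ↦ hf (-x))
      (by simpa using h0)
      (fun x hx hxa ↦ hpos (-x) (hreflect hx hxa).1 (hreflect hx hxa).2)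
      (hlsc.comp continuous_neg.continuousOn fun x hx ↦ hreflect hx.1 hx.2)
  simpa using hneg.neg

end IsDescendingOrbit

theorem tendsto_int_atTop_iff {α : Type*} {u : ℤ → α} {l : Filter α} :
    Tendsto u atTop l ↔ Tendsto (fun n : ℕ ↦ u n) atTop l := by
  rw [← Nat.map_cast_int_atTop, tendsto_map'_iff, Function.comp_def]

theorem tendsto_int_atBot_iff {α : Type*} {u : ℤ → α} {l : Filter α} :
    Tendsto u atBot l ↔ Tendsto (fun n : ℕ ↦ u (-n)) atTop l := by
  rw [← map_neg_atTop, tendsto_map'_iff, tendsto_int_atTop_iff, Function.comp_def]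

theorem stmt0_general
    (a b : EReal)
    (f : ℝ → ℝ)
    (hf_nonneg : ∀ x : ℝ, 0 ≤ f x)
    (hf_pos : ∀ x : ℝ, a < (x : EReal) → (x : EReal) < b → 0 < f x)
    (hf_lsc : LowerSemicontinuousOn f {x | a < (x : EReal) ∧ (x : EReal) < b})
    (s : ℤ → ℝ)
    (hs0a : a < (s 0 : EReal)) (hs0b : (s 0 : EReal) < b)
    (hup : ∀ k : ℤ, 0 ≤ k →
      ((b ≤ ((s k + f (s k) : ℝ) : EReal) → ((s (k + 1) : ℝ) : EReal) = b) ∧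
       (((s k + f (s k) : ℝ) : EReal) < b → s (k + 1) = s k + f (s k))))
    (hdown : ∀ k : ℤ, k ≤ 0 →
      ((((s k - f (s k) : ℝ) : EReal) ≤ a → ((s (k - 1) : ℝ) : EReal) = a) ∧
       (a < ((s k - f (s k) : ℝ) : EReal) → s (k - 1) = s k - f (s k)))) :
    Tendsto (fun k : ℤ => (s k : EReal)) atTop (𝓝 b) ∧
      Tendsto (fun k : ℤ => (s k : EReal)) atBot (𝓝 a) := by
  have hasc : IsAscendingOrbit f b (fun n : ℕ ↦ s n) :=
    .of_forall_imp fun n ↦ hup n n.cast_nonneg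
  have hdesc : IsDescendingOrbit f a (fun n : ℕ ↦ s (-n)) :=
    .of_forall_imp fun n ↦ by
      simpa only [Nat.cast_succ, neg_add'] using hdown (-n) (neg_nonpos.2 n.cast_nonneg)
  have above : ∀ {x : ℝ}, s 0 ≤ x → a < (x : EReal) :=
    fun hx ↦ hs0a.trans_le (EReal.coe_le_coe_iff.2 hx)
  have below : ∀ {x : ℝ}, x ≤ s 0 → (x : EReal) < b :=
    fun hx ↦ (EReal.coe_le_coe_iff.2 hx).trans_lt hs0b
  constructor
  · exact tendsto_int_atTop_iff.2 <| hasc.tendsto_barrier hf_nonneg hs0b.le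
      (fun x hx hxb ↦ hf_pos x (above hx) hxb) (hf_lsc.mono fun x hx ↦ ⟨above hx.1, hx.2⟩)
  · exact tendsto_int_atBot_iff.2 <| hdesc.tendsto_barrier hf_nonneg hs0a.le
      (fun x hx hxa ↦ hf_pos x hxa (below hx)) (hf_lsc.mono fun x hx ↦ ⟨hx.2, below hx.1⟩)

/-- Given `-∞ ≤ a < b ≤ ∞`, a function `f` that is strictly positive on
`(a,b)`, zero on `(-∞,a] ∪ [b,∞)` and `1`-Lipschitz on `(a,b)`, and the sequence
`(s_k)_{k ∈ ℤ}` defined by `s_{k+1} = s_k + f(s_k)/2` for `k ≥ 0` and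
`s_{k-1} = s_k - f(s_k)/2` for `k ≤ 0` (clamped at `b`, resp. `a`, upon overshooting),
one has `lim_{k → ∞} s_k = b` and `lim_{k → -∞} s_k = a`. -/
theorem stmt0
    (a b : EReal) (hab : a < b)
    (f : ℝ → ℝ)
    (hf_nonneg : ∀ x : ℝ, 0 ≤ f x)
    (hf_pos : ∀ x : ℝ, a < (x : EReal) → (x : EReal) < b → 0 < f x)
    (hf_zero : ∀ x : ℝ, ((x : EReal) ≤ a ∨ b ≤ (x : EReal)) → f x = 0)
    (hf_lip : ∀ u v : ℝ, a < (u : EReal) → (u : EReal) < b →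
      a < (v : EReal) → (v : EReal) < b → |f u - f v| ≤ |u - v|)
    (s : ℤ → ℝ)
    (hs0a : a < (s 0 : EReal)) (hs0b : (s 0 : EReal) < b)
    (hup : ∀ k : ℤ, 0 ≤ k →
      ((b ≤ ((s k + f (s k) / 2 : ℝ) : EReal) → ((s (k + 1) : ℝ) : EReal) = b) ∧
       (((s k + f (s k) / 2 : ℝ) : EReal) < b → s (k + 1) = s k + f (s k) / 2)))
    (hdown : ∀ k : ℤ, k ≤ 0 →
      ((((s k - f (s k) / 2 : ℝ) : EReal) ≤ a → ((s (k - 1) : ℝ) : EReal) = a) ∧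
       (a < ((s k - f (s k) / 2 : ℝ) : EReal) → s (k - 1) = s k - f (s k) / 2))) :
    Tendsto (fun k : ℤ => (s k : EReal)) atTop (𝓝 b) ∧
      Tendsto (fun k : ℤ => (s k : EReal)) atBot (𝓝 a) := by
  have hf_lipOn : LipschitzOnWith 1 f {x | a < (x : EReal) ∧ (x : EReal) < b} :=
    .of_dist_le_mul fun u hu v hv ↦ by
      simpa [Real.dist_eq] using hf_lip u v hu.1 hu.2 hv.1 hv.2
  exact stmt0_general a b (fun x ↦ f x / 2) (fun x ↦ div_nonneg (hf_nonneg x) zero_le_two)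
    (fun x hxa hxb ↦ half_pos (hf_pos x hxa hxb))
    (hf_lipOn.continuousOn.div_const 2).lowerSemicontinuousOn s hs0a hs0b hup hdown
end

section
/- Assume $b=\infty$. Then $\tfrac14\sum_{k\ge 0} f(s_k)^2 \le \int_{s_0}^{\infty} f(v)\,dv \le \tfrac34\sum_{k\ge 0} f(s_k)^2$; in particular $\sum_{k\ge 0} f(s_k)^2=\infty$ if and only if $\int_{s_0}^{\infty} f(v)\,dv=\infty$. -/
open MeasureTheory ENNReal

/-!
Cut `(s 0, ∞)` at the points of the sequence. Across the `k`-th piece, which has length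
`h * f (s k)`, a `K`-Lipschitz function moves by at most `K * h * f (s k)`, so it stays between
`(1 - K * h) * f (s k)` and `(1 + K * h) * f (s k)`; hence its integral over the piece is
comparable to `f (s k) ^ 2`. The pieces exhaust the half-line because a finite limit of the
sequence would be a zero of `f`.
-/

section

open Set Filter
open scoped NNReal Topology

theorem eq_top_iff_of_mul_le_of_le_mul {c C x y : ℝ≥0∞} (hc : c ≠ 0) (hC : C ≠ ⊤)
    (hlower : c * x ≤ y) (hupper : y ≤ C * x) : x = ⊤ ↔ y = ⊤ := by
  constructor
  · rintro rfl
    rwa [ENNReal.mul_top hc, top_le_iff] at hlower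
  · rintro rfl
    by_contra hx
    exact ENNReal.mul_ne_top hC hx (top_le_iff.1 hupper)

theorem lintegral_Ioi_eq_tsum_lintegral_Ioc {α : Type*} [LinearOrder α] [TopologicalSpace α]
    [OrderClosedTopology α] [MeasurableSpace α] [OpensMeasurableSpace α] {μ : Measure α}
    {s : ℕ → α} (hs : Monotone s) (hs_unbdd : ¬BddAbove (range s)) (g : α → ℝ≥0∞) :
    ∫⁻ x in Ioi (s 0), g x ∂μ = ∑' k, ∫⁻ x in Ioc (s k) (s (k + 1)), g x ∂μ := by
  have hcover : ⋃ k, Ioc (s k) (s (k + 1)) = Ioi (s 0) :=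
    iUnion_Ioc_map_succ_eq_Ioi (fun k => hs k.zero_le) hs_unbdd
  rw [← hcover]
  exact lintegral_iUnion (fun _ => measurableSet_Ioc) hs.pairwise_disjoint_on_Ioc_succ g

variable {f : ℝ → ℝ} {K : ℝ≥0} {h : ℝ} {s : ℕ → ℝ}

theorem abs_sub_left_le_of_lipschitzOnWith_Icc {a b x : ℝ} (hf : LipschitzOnWith K f (Icc a b))
    (hx : x ∈ Icc a b) : |f x - f a| ≤ K * (b - a) := by
  have ha : a ∈ Icc a b := left_mem_Icc.2 (hx.1.trans hx.2)
  calc |f x - f a| ≤ K * |x - a| := hf.dist_le_mul x hx a ha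
    _ = K * (x - a) := by rw [abs_of_nonneg (sub_nonneg.2 hx.1)]
    _ ≤ K * (b - a) := by gcongr; exact hx.2

theorem ofReal_le_setLIntegral_Ioc_of_lipschitzOnWith {a b : ℝ} (hab : a ≤ b)
    (hf : LipschitzOnWith K f (Icc a b)) :
    ENNReal.ofReal ((f a - K * (b - a)) * (b - a)) ≤ ∫⁻ x in Ioc a b, ENNReal.ofReal (f x) :=
  calc ENNReal.ofReal ((f a - K * (b - a)) * (b - a))
      = ∫⁻ _ in Ioc a b, ENNReal.ofReal (f a - K * (b - a)) := by
        rw [setLIntegral_const, Real.volume_Ioc, ENNReal.ofReal_mul' (sub_nonneg.2 hab)]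
    _ ≤ ∫⁻ x in Ioc a b, ENNReal.ofReal (f x) :=
        setLIntegral_mono' measurableSet_Ioc fun x hx => ENNReal.ofReal_le_ofReal <| by
          linarith [(abs_le.1 (abs_sub_left_le_of_lipschitzOnWith_Icc hf
            (Ioc_subset_Icc_self hx))).1]

theorem setLIntegral_Ioc_le_ofReal_of_lipschitzOnWith {a b : ℝ} (hab : a ≤ b)
    (hf : LipschitzOnWith K f (Icc a b)) :
    ∫⁻ x in Ioc a b, ENNReal.ofReal (f x) ≤ ENNReal.ofReal ((f a + K * (b - a)) * (b - a)) :=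
  calc ∫⁻ x in Ioc a b, ENNReal.ofReal (f x)
      ≤ ∫⁻ _ in Ioc a b, ENNReal.ofReal (f a + K * (b - a)) :=
        setLIntegral_mono' measurableSet_Ioc fun x hx => ENNReal.ofReal_le_ofReal <| by
          linarith [(abs_le.1 (abs_sub_left_le_of_lipschitzOnWith_Icc hf
            (Ioc_subset_Icc_self hx))).2]
    _ = ENNReal.ofReal ((f a + K * (b - a)) * (b - a)) := by
        rw [setLIntegral_const, Real.volume_Ioc, ENNReal.ofReal_mul' (sub_nonneg.2 hab)]

/-- The points produced by the explicit Euler scheme with step size `h` for the equation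
`x' = f x`; for `h = 1 / 2` this is the sequence `s` of `stmt2`. -/
def IsEulerSequence (h : ℝ) (f : ℝ → ℝ) (s : ℕ → ℝ) : Prop :=
  ∀ k, s (k + 1) = s k + h * f (s k)

namespace IsEulerSequence

theorem monotone (hs : IsEulerSequence h f s) (hh : 0 ≤ h) (hf : ∀ x ∈ Ici (s 0), 0 ≤ f x) :
    Monotone s := by
  have le_succ {k : ℕ} (hk : s 0 ≤ s k) : s k ≤ s (k + 1) := by
    rw [hs k]
    exact le_add_of_nonneg_right (mul_nonneg hh (hf _ hk))
  have zero_le (k : ℕ) : s 0 ≤ s k := by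
    induction k with
    | zero => rfl
    | succ k ih => exact ih.trans (le_succ ih)
  exact monotone_nat_of_le_succ fun k => le_succ (zero_le k)

theorem not_bddAbove_range (hs : IsEulerSequence h f s) (hh : 0 < h)
    (hpos : ∀ x ∈ Ici (s 0), 0 < f x) (hcont : ContinuousOn f (Ici (s 0))) :
    ¬BddAbove (range s) := by
  intro hbdd
  have hmono := hs.monotone hh.le fun x hx => (hpos x hx).le
  obtain ⟨L, hL⟩ : ∃ L, Tendsto s atTop (𝓝 L) := ⟨_, tendsto_atTop_ciSup hmono hbdd⟩
  have hL_mem : L ∈ Ici (s 0) := hmono.ge_of_tendsto hL 0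
  have hfL : Tendsto (fun k => f (s k)) atTop (𝓝 (f L)) :=
    (hcont L hL_mem).tendsto.comp <|
      tendsto_nhdsWithin_iff.2 ⟨hL, .of_forall fun k => hmono k.zero_le⟩
  have hstep : Tendsto (fun k => s (k + 1)) atTop (𝓝 (L + h * f L)) :=
    (hL.add (hfL.const_mul h)).congr fun k => (hs k).symm
  have hfixed : L = L + h * f L := tendsto_nhds_unique (hL.comp (tendsto_add_atTop_nat 1)) hstep
  linarith [mul_pos hh (hpos L hL_mem)]

theorem lintegral_Ioi_eq_tsum (hs : IsEulerSequence h f s) (hh : 0 < h)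
    (hpos : ∀ x ∈ Ici (s 0), 0 < f x) (hcont : ContinuousOn f (Ici (s 0))) (g : ℝ → ℝ≥0∞) :
    ∫⁻ x in Ioi (s 0), g x = ∑' k, ∫⁻ x in Ioc (s k) (s (k + 1)), g x :=
  lintegral_Ioi_eq_tsum_lintegral_Ioc (hs.monotone hh.le fun x hx => (hpos x hx).le)
    (hs.not_bddAbove_range hh hpos hcont) g

theorem mul_tsum_le_lintegral (hs : IsEulerSequence h f s) (hh : 0 < h)
    (hpos : ∀ x ∈ Ici (s 0), 0 < f x) (hlip : LipschitzOnWith K f (Ici (s 0))) :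
    ENNReal.ofReal (h * (1 - K * h)) * ∑' k, ENNReal.ofReal (f (s k) ^ 2)
      ≤ ∫⁻ x in Ioi (s 0), ENNReal.ofReal (f x) := by
  have hmono := hs.monotone hh.le fun x hx => (hpos x hx).le
  rw [hs.lintegral_Ioi_eq_tsum hh hpos hlip.continuousOn, ← ENNReal.tsum_mul_left]
  refine ENNReal.tsum_le_tsum fun k => ?_
  calc ENNReal.ofReal (h * (1 - K * h)) * ENNReal.ofReal (f (s k) ^ 2)
      = ENNReal.ofReal ((f (s k) - K * (s (k + 1) - s k)) * (s (k + 1) - s k)) := by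
        rw [← ENNReal.ofReal_mul' (sq_nonneg _), hs k]
        ring_nf
    _ ≤ ∫⁻ x in Ioc (s k) (s (k + 1)), ENNReal.ofReal (f x) :=
        ofReal_le_setLIntegral_Ioc_of_lipschitzOnWith (hmono k.le_succ)
          (hlip.mono fun _ hx => (hmono k.zero_le).trans hx.1)

theorem lintegral_le_mul_tsum (hs : IsEulerSequence h f s) (hh : 0 < h)
    (hpos : ∀ x ∈ Ici (s 0), 0 < f x) (hlip : LipschitzOnWith K f (Ici (s 0))) :
    ∫⁻ x in Ioi (s 0), ENNReal.ofReal (f x)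
      ≤ ENNReal.ofReal (h * (1 + K * h)) * ∑' k, ENNReal.ofReal (f (s k) ^ 2) := by
  have hmono := hs.monotone hh.le fun x hx => (hpos x hx).le
  rw [hs.lintegral_Ioi_eq_tsum hh hpos hlip.continuousOn, ← ENNReal.tsum_mul_left]
  refine ENNReal.tsum_le_tsum fun k => ?_
  calc ∫⁻ x in Ioc (s k) (s (k + 1)), ENNReal.ofReal (f x)
      ≤ ENNReal.ofReal ((f (s k) + K * (s (k + 1) - s k)) * (s (k + 1) - s k)) :=
        setLIntegral_Ioc_le_ofReal_of_lipschitzOnWith (hmono k.le_succ)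
          (hlip.mono fun _ hx => (hmono k.zero_le).trans hx.1)
    _ = ENNReal.ofReal (h * (1 + K * h)) * ENNReal.ofReal (f (s k) ^ 2) := by
        rw [← ENNReal.ofReal_mul' (sq_nonneg _), hs k]
        ring_nf

end IsEulerSequence

theorem stmt2_general (hs : IsEulerSequence h f s) (hh : 0 < h) (hKh : K * h < 1)
    (hpos : ∀ x ∈ Ici (s 0), 0 < f x) (hlip : LipschitzOnWith K f (Ici (s 0))) :
    ENNReal.ofReal (h * (1 - K * h)) * ∑' k, ENNReal.ofReal (f (s k) ^ 2)
        ≤ ∫⁻ x in Ioi (s 0), ENNReal.ofReal (f x) ∧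
      ∫⁻ x in Ioi (s 0), ENNReal.ofReal (f x)
        ≤ ENNReal.ofReal (h * (1 + K * h)) * ∑' k, ENNReal.ofReal (f (s k) ^ 2) ∧
      (∑' k, ENNReal.ofReal (f (s k) ^ 2) = ⊤ ↔
        ∫⁻ x in Ioi (s 0), ENNReal.ofReal (f x) = ⊤) := by
  have hlower := hs.mul_tsum_le_lintegral hh hpos hlip
  have hupper := hs.lintegral_le_mul_tsum hh hpos hlip
  have hc : ENNReal.ofReal (h * (1 - K * h)) ≠ 0 :=
    (ENNReal.ofReal_pos.2 (mul_pos hh (sub_pos.2 hKh))).ne'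
  exact ⟨hlower, hupper, eq_top_iff_of_mul_le_of_le_mul hc ENNReal.ofReal_ne_top hlower hupper⟩

end

/-- Given `-∞ ≤ a < b = ∞` and a function `f` that is strictly positive on
`(a,∞)`, zero on `(-∞,a]` and `1`-Lipschitz on `(a,∞)`, and the sequence `s_{k+1} = s_k + f(s_k)/2`
started at `s_0 ∈ (a,∞)`, one has
`(1/4) ∑_{k≥0} f(s_k)² ≤ ∫_{s_0}^∞ f(v) dv ≤ (3/4) ∑_{k≥0} f(s_k)²`; in particular
`∑_{k≥0} f(s_k)² = ∞` iff `∫_{s_0}^∞ f(v) dv = ∞`. -/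
theorem stmt2
    (a : EReal) (ha : a < ⊤)
    (f : ℝ → ℝ)
    (hf_nonneg : ∀ x : ℝ, 0 ≤ f x)
    (hf_pos : ∀ x : ℝ, a < (x : EReal) → 0 < f x)
    (hf_zero : ∀ x : ℝ, (x : EReal) ≤ a → f x = 0)
    (hf_lip : ∀ u v : ℝ, a < (u : EReal) → a < (v : EReal) → |f u - f v| ≤ |u - v|)
    (s : ℕ → ℝ) (hs0 : a < (s 0 : EReal))
    (hrec : ∀ k : ℕ, s (k + 1) = s k + f (s k) / 2) :
    (1 / 4 : ℝ≥0∞) * ∑' k : ℕ, ENNReal.ofReal (f (s k) ^ 2)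
        ≤ ∫⁻ v in Set.Ioi (s 0), ENNReal.ofReal (f v) ∧
      (∫⁻ v in Set.Ioi (s 0), ENNReal.ofReal (f v))
        ≤ (3 / 4 : ℝ≥0∞) * ∑' k : ℕ, ENNReal.ofReal (f (s k) ^ 2) ∧
      ((∑' k : ℕ, ENNReal.ofReal (f (s k) ^ 2) = ⊤) ↔
        (∫⁻ v in Set.Ioi (s 0), ENNReal.ofReal (f v)) = ⊤) := by
  have hIci : ∀ x ∈ Set.Ici (s 0), a < (x : EReal) := fun x hx =>
    hs0.trans_le (EReal.coe_le_coe_iff.2 hx)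
  have hs : IsEulerSequence (1 / 2) f s := fun k => by rw [hrec k]; ring
  have hlip : LipschitzOnWith 1 f (Set.Ici (s 0)) := .of_dist_le_mul fun u hu v hv => by
    simpa [Real.dist_eq] using hf_lip u v (hIci u hu) (hIci v hv)
  have hquarter : ENNReal.ofReal (1 / 2 * (1 - (1 : NNReal) * (1 / 2))) = 1 / 4 := by
    norm_num [ENNReal.ofReal_div_of_pos]
  have hthree_quarters : ENNReal.ofReal (1 / 2 * (1 + (1 : NNReal) * (1 / 2))) = 3 / 4 := by
    norm_num [ENNReal.ofReal_div_of_pos]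
  simpa only [hquarter, hthree_quarters] using
    stmt2_general hs (by norm_num) (by norm_num) (fun x hx => hf_pos x (hIci x hx)) hlip
end

section
/- Let $(\Lambda,\mathcal{A},\mu)$ be a measure space and let $g_1,g_2:\Lambda\to(0,\infty)$ be measurable with $\int_\Lambda g_1\,d\mu = \int_\Lambda g_2\,d\mu = 1$. Suppose $a\in(0,1]$ is such that $g_1(y_1)\,g_2(y_2) \ge a\, g_1(y_2)\, g_2(y_1)$ for all $y_1,y_2\in\Lambda$. Then $a\, g_2(y) \le g_1(y) \le a^{-1} g_2(y)$ for every $y\in\Lambda$. -/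
open MeasureTheory

section IntegralComparison

variable {Λ : Type*} [MeasurableSpace Λ] {μ : Measure Λ} {f g : Λ → ℝ} {c d : ℝ}

theorem mul_integral_le_mul_integral_of_ae_le (hf : Integrable f μ) (hg : Integrable g μ)
    (h : ∀ᵐ z ∂μ, c * f z ≤ d * g z) : c * ∫ z, f z ∂μ ≤ d * ∫ z, g z ∂μ :=
  calc c * ∫ z, f z ∂μ = ∫ z, c * f z ∂μ := (integral_const_mul c f).symm
    _ ≤ ∫ z, d * g z ∂μ := integral_mono_ae (hf.const_mul c) (hg.const_mul d) h
    _ = d * ∫ z, g z ∂μ := integral_const_mul d g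

theorem le_of_ae_mul_le_mul_of_integral_eq (hpos : 0 < ∫ z, f z ∂μ)
    (heq : ∫ z, f z ∂μ = ∫ z, g z ∂μ) (h : ∀ᵐ z ∂μ, c * f z ≤ d * g z) : c ≤ d := by
  have hf : Integrable f μ := .of_integral_ne_zero hpos.ne'
  have hg : Integrable g μ := .of_integral_ne_zero (heq ▸ hpos.ne')
  have hmass : c * ∫ z, f z ∂μ ≤ d * ∫ z, f z ∂μ := by
    simpa only [← heq] using mul_integral_le_mul_integral_of_ae_le hf hg h
  exact le_of_mul_le_mul_right hmass hpos

end IntegralComparison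

theorem stmt4_general {Λ : Type*} [MeasurableSpace Λ] {μ : Measure Λ} {g₁ g₂ : Λ → ℝ}
    (hpos : 0 < ∫ y, g₁ y ∂μ) (heq : ∫ y, g₁ y ∂μ = ∫ y, g₂ y ∂μ) {a : ℝ} (ha : 0 < a)
    (hcross : ∀ y₁ y₂, a * (g₁ y₂ * g₂ y₁) ≤ g₁ y₁ * g₂ y₂) (y : Λ) :
    a * g₂ y ≤ g₁ y ∧ g₁ y ≤ a⁻¹ * g₂ y := by
  have lower : a * g₂ y ≤ g₁ y :=
    le_of_ae_mul_le_mul_of_integral_eq hpos heq <| .of_forall fun z ↦ by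
      linarith [hcross y z]
  have upper : a * g₁ y ≤ g₂ y :=
    le_of_ae_mul_le_mul_of_integral_eq (heq ▸ hpos) heq.symm <| .of_forall fun z ↦ by
      linarith [hcross z y]
  exact ⟨lower, (le_inv_mul_iff₀ ha).mpr upper⟩

/-- If `g₁, g₂` are measurable positive probability densities with respect to a
measure `μ` and `a ∈ (0,1]` satisfies the cross-ratio bound
`g₁(y₁) g₂(y₂) ≥ a g₁(y₂) g₂(y₁)` for all `y₁, y₂`, then
`a g₂(y) ≤ g₁(y) ≤ a⁻¹ g₂(y)` for every `y`. -/
theorem stmt4 {Λ : Type*} [MeasurableSpace Λ] (μ : Measure Λ)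
    (g₁ g₂ : Λ → ℝ) (hg₁m : Measurable g₁) (hg₂m : Measurable g₂)
    (hg₁pos : ∀ y, 0 < g₁ y) (hg₂pos : ∀ y, 0 < g₂ y)
    (hg₁int : ∫ y, g₁ y ∂μ = 1) (hg₂int : ∫ y, g₂ y ∂μ = 1)
    (a : ℝ) (ha0 : 0 < a) (ha1 : a ≤ 1)
    (hcross : ∀ y₁ y₂, a * (g₁ y₂ * g₂ y₁) ≤ g₁ y₁ * g₂ y₂) :
    ∀ y, a * g₂ y ≤ g₁ y ∧ g₁ y ≤ a⁻¹ * g₂ y :=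
  stmt4_general (hg₁int ▸ one_pos) (hg₁int.trans hg₂int.symm) ha0 hcross
end

section
/- Let $n\ge 1$, let $(E_i,\mathcal{E}_i,\mu_i)$, $i=0,1,\dots,n$, be $\sigma$-finite measure spaces, and for each $1\le i\le n$ let $k_i:E_{i-1}\times E_i\to(0,\infty)$ be measurable with $\int_{E_i} k_i(x,y)\,\mu_i(dy)=1$ for every $x\in E_{i-1}$. Suppose $a\in(0,1]$ is such that for every $i$ and all $x_1,x_2\in E_{i-1}$, $y_1,y_2\in E_i$: $k_i(x_1,y_1)\,k_i(x_2,y_2) \ge a\, k_i(x_1,y_2)\,k_i(x_2,y_1)$. Define composed densities by $K_1=k_1$ and $K_i(x,y)=\int_{E_{i-1}} K_{i-1}(x,v)\,k_i(v,y)\,\mu_{i-1}(dv)$ for $x\in E_0$, $y\in E_i$. Then for all $x_1,x_2\in E_0$ and $y_1,y_2\in E_n$: $K_n(x_1,y_1)\,K_n(x_2,y_2) \ge a_n\, K_n(x_1,y_2)\,K_n(x_2,y_1)$, where $a_n = 1-(1-a)(1-a^2)^{n-1}$. -/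
open MeasureTheory

/-!
For a density `k` compare the `2 × 2` minor `k x₁ y₁ k x₂ y₂ - k x₁ y₂ k x₂ y₁` with the
corresponding permanent. The cross-ratio bound with constant `a` says exactly that every minor is at
most `τ = (1 - a) / (1 + a)` times the permanent in absolute value. By Andréief's identity, a minor
(permanent) of a composition is half the double integral of the product of the minors (permanents)
of its factors, so `τ` is multiplicative under composition. Hence a composition of `n` densities has
cross-ratio constant `(1 - τ ^ n) / (1 + τ ^ n)`, which by Bernoulli's inequality is at least
`1 - (1 - a) (1 - a ^ 2) ^ (n - 1)`.
-/

section CrossRatio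

variable {X Y : Type*}

/-- The cross-ratio bound with constant `a`, in product form so that `k` may vanish. -/
def CrossRatioBound (a : ℝ) (k : X → Y → ℝ) : Prop :=
  ∀ x₁ x₂ y₁ y₂, a * (k x₁ y₂ * k x₂ y₁) ≤ k x₁ y₁ * k x₂ y₂

/-- The `2 × 2` minor (`s = -1`) or permanent (`s = 1`) of `k` with rows `x₁, x₂` and
columns `y₁, y₂`; a single definition lets both share Andréief's identity. -/
def crossForm (s : ℝ) (k : X → Y → ℝ) (x₁ x₂ : X) (y₁ y₂ : Y) : ℝ :=
  k x₁ y₁ * k x₂ y₂ + s * (k x₁ y₂ * k x₂ y₁)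

/-- Every `2 × 2` minor of `k` is in absolute value at most `τ` times the permanent: the form
of the cross-ratio bound whose constant is multiplicative under composition. -/
def MinorBound (τ : ℝ) (k : X → Y → ℝ) : Prop :=
  ∀ x₁ x₂ y₁ y₂, |crossForm (-1) k x₁ x₂ y₁ y₂| ≤ τ * crossForm 1 k x₁ x₂ y₁ y₂

lemma CrossRatioBound.mono {a b : ℝ} {k : X → Y → ℝ} (h : CrossRatioBound b k) (hab : a ≤ b)
    (hk : ∀ x y, 0 ≤ k x y) : CrossRatioBound a k := fun x₁ x₂ y₁ y₂ =>
  (mul_le_mul_of_nonneg_right hab (mul_nonneg (hk x₁ y₂) (hk x₂ y₁))).trans (h x₁ x₂ y₁ y₂)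

lemma CrossRatioBound.minorBound {a : ℝ} {k : X → Y → ℝ} (h : CrossRatioBound a k)
    (ha : -1 < a) : MinorBound ((1 - a) / (1 + a)) k := by
  intro x₁ x₂ y₁ y₂
  have lower := h x₁ x₂ y₁ y₂
  have upper := h x₁ x₂ y₂ y₁
  have one_add_pos : 0 < 1 + a := by linarith
  rw [div_mul_eq_mul_div, le_div_iff₀ one_add_pos, ← abs_of_pos one_add_pos, ← abs_mul, abs_le]
  unfold crossForm
  constructor <;> linarith

lemma MinorBound.crossRatioBound {τ : ℝ} {k : X → Y → ℝ} (h : MinorBound τ k)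
    (hτ : -1 < τ) : CrossRatioBound ((1 - τ) / (1 + τ)) k := by
  intro x₁ x₂ y₁ y₂
  have lower := (abs_le.mp (h x₁ x₂ y₁ y₂)).1
  unfold crossForm at lower
  rw [div_mul_eq_mul_div, div_le_iff₀ (by linarith)]
  linarith

end CrossRatio

section Composition

variable {X V Y : Type*} {K : X → V → ℝ} {k : V → Y → ℝ}

lemma crossForm_mul_crossForm_eq (s : ℝ) (x₁ x₂ : X) (y₁ y₂ : Y) (u v : V) :
    crossForm s K x₁ x₂ u v * crossForm s k u v y₁ y₂ =
      (K x₁ u * k u y₁) * (K x₂ v * k v y₂) + s ^ 2 * ((K x₂ u * k u y₂) * (K x₁ v * k v y₁)) +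
        s * ((K x₁ u * k u y₂) * (K x₂ v * k v y₁) + (K x₂ u * k u y₁) * (K x₁ v * k v y₂)) := by
  unfold crossForm
  ring

variable [MeasurableSpace V] {μ : Measure V}

/-- The composition of two transition densities, the first of them taken with respect to `μ`. -/
noncomputable def compDensity (μ : Measure V) (K : X → V → ℝ) (k : V → Y → ℝ) (x : X) (y : Y) :
    ℝ :=
  ∫ v, K x v * k v y ∂μ

lemma integrable_crossForm_mul_crossForm (hKk : ∀ x y, Integrable (fun v => K x v * k v y) μ)
    (s : ℝ) (x₁ x₂ : X) (y₁ y₂ : Y) :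
    Integrable (fun z : V × V => crossForm s K x₁ x₂ z.1 z.2 * crossForm s k z.1 z.2 y₁ y₂)
      (μ.prod μ) := by
  simp only [crossForm_mul_crossForm_eq]
  exact (((hKk x₁ y₁).mul_prod (hKk x₂ y₂)).add
    (((hKk x₂ y₂).mul_prod (hKk x₁ y₁)).const_mul _)).add
      ((((hKk x₁ y₂).mul_prod (hKk x₂ y₁)).add ((hKk x₂ y₁).mul_prod (hKk x₁ y₂))).const_mul _)

variable [SFinite μ]

lemma integral_crossForm_mul_crossForm (hKk : ∀ x y, Integrable (fun v => K x v * k v y) μ)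
    {s : ℝ} (hs : s ^ 2 = 1) (x₁ x₂ : X) (y₁ y₂ : Y) :
    ∫ z : V × V, crossForm s K x₁ x₂ z.1 z.2 * crossForm s k z.1 z.2 y₁ y₂ ∂μ.prod μ =
      2 * crossForm s (compDensity μ K k) x₁ x₂ y₁ y₂ := by
  have integrable (x x' : X) (y y' : Y) := (hKk x y).mul_prod (hKk x' y')
  have integrable_add (x x' w w' : X) (y y' z z' : Y) : Integrable (fun p : V × V =>
      (K x p.1 * k p.1 y) * (K x' p.2 * k p.2 y') + (K w p.1 * k p.1 z) * (K w' p.2 * k p.2 z'))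
      (μ.prod μ) := (integrable x x' y y').add (integrable w w' z z')
  have fubini (x x' : X) (y y' : Y) :
      ∫ z : V × V, (K x z.1 * k z.1 y) * (K x' z.2 * k z.2 y') ∂μ.prod μ =
        compDensity μ K k x y * compDensity μ K k x' y' :=
    integral_prod_mul (fun v => K x v * k v y) (fun v => K x' v * k v y')
  simp only [crossForm_mul_crossForm_eq, hs, one_mul]
  rw [integral_add (integrable_add ..) ((integrable_add ..).const_mul s),
    integral_add (integrable ..) (integrable ..), integral_const_mul,
    integral_add (integrable ..) (integrable ..)]
  simp only [fubini]
  unfold crossForm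
  ring

lemma MinorBound.comp {σ τ : ℝ} (hK : MinorBound σ K) (hk : MinorBound τ k)
    (hKk : ∀ x y, Integrable (fun v => K x v * k v y) μ) :
    MinorBound (σ * τ) (compDensity μ K k) := by
  intro x₁ x₂ y₁ y₂
  have pointwise (z : V × V) :
      ‖crossForm (-1) K x₁ x₂ z.1 z.2 * crossForm (-1) k z.1 z.2 y₁ y₂‖ ≤
        σ * τ * (crossForm 1 K x₁ x₂ z.1 z.2 * crossForm 1 k z.1 z.2 y₁ y₂) := by
    rw [Real.norm_eq_abs, abs_mul, mul_mul_mul_comm]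
    exact mul_le_mul (hK ..) (hk ..) (abs_nonneg _) ((abs_nonneg _).trans (hK ..))
  have integrated := norm_integral_le_of_norm_le
    ((integrable_crossForm_mul_crossForm hKk 1 x₁ x₂ y₁ y₂).const_mul (σ * τ))
    (Filter.Eventually.of_forall pointwise)
  rw [integral_const_mul, integral_crossForm_mul_crossForm hKk (by norm_num),
    integral_crossForm_mul_crossForm hKk (by norm_num), Real.norm_eq_abs, abs_mul, abs_two]
    at integrated
  linarith

end Composition

section TransitionDensity

variable {X V Y : Type*} [MeasurableSpace X] [MeasurableSpace V] [MeasurableSpace Y]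

/-- `k` is a probability transition density from `X` to `Y` with respect to `ν`. Zeros are allowed,
and the normalization makes each `k x` integrable, since Bochner integrals of non-integrable
functions are `0`. -/
structure IsTransitionDensity (ν : Measure Y) (k : X → Y → ℝ) : Prop where
  measurable : Measurable (Function.uncurry k)
  nonneg : ∀ x y, 0 ≤ k x y
  integral_eq_one : ∀ x, ∫ y, k x y ∂ν = 1

namespace IsTransitionDensity

variable {μ : Measure V} {ν : Measure Y} {K : X → V → ℝ} {k : V → Y → ℝ}

lemma integrable (hk : IsTransitionDensity ν k) (v : V) : Integrable (k v) ν :=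
  .of_integral_ne_zero (by simp [hk.integral_eq_one])

lemma integrable_mul_prod [SFinite ν] (hk : IsTransitionDensity ν k) {f : V → ℝ}
    (hf : Integrable f μ) : Integrable (fun z : V × Y => f z.1 * k z.1 z.2) (μ.prod ν) := by
  have measurable : AEStronglyMeasurable (fun z : V × Y => f z.1 * k z.1 z.2) (μ.prod ν) :=
    hf.aestronglyMeasurable.comp_fst.mul hk.measurable.aestronglyMeasurable
  refine (integrable_prod_iff measurable).mpr
    ⟨.of_forall fun v => (hk.integrable v).const_mul (f v), ?_⟩
  simpa only [norm_mul, integral_const_mul, Real.norm_of_nonneg (hk.nonneg _ _),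
    hk.integral_eq_one, mul_one] using hf.norm

lemma comp [SFinite μ] [SFinite ν] (hK : IsTransitionDensity μ K) (hk : IsTransitionDensity ν k) :
    IsTransitionDensity ν (compDensity μ K k) where
  measurable := by
    have integrand : Measurable fun z : (X × Y) × V => K z.1.1 z.2 * k z.2 z.1.2 :=
      (hK.measurable.comp (by fun_prop : Measurable fun z : (X × Y) × V => (z.1.1, z.2))).mul
        (hk.measurable.comp (by fun_prop : Measurable fun z : (X × Y) × V => (z.2, z.1.2)))
    exact integrand.stronglyMeasurable.integral_prod_right'.measurable
  nonneg x y := integral_nonneg fun v => mul_nonneg (hK.nonneg x v) (hk.nonneg v y)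
  integral_eq_one x := calc
    ∫ y, ∫ v, K x v * k v y ∂μ ∂ν = ∫ v, ∫ y, K x v * k v y ∂ν ∂μ :=
      (integral_integral_swap (hk.integrable_mul_prod (hK.integrable x))).symm
    _ = 1 := by simp only [integral_const_mul, hk.integral_eq_one, mul_one, hK.integral_eq_one]

lemma mul_le_of_crossRatioBound (hk : IsTransitionDensity ν k) {a : ℝ}
    (hcross : CrossRatioBound a k) (u v : V) (y : Y) : a * k u y ≤ k v y := calc
  a * k u y = ∫ y', a * k u y * k v y' ∂ν := by
    rw [integral_const_mul, hk.integral_eq_one, mul_one]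
  _ ≤ ∫ y', k v y * k u y' ∂ν :=
    integral_mono ((hk.integrable v).const_mul _) ((hk.integrable u).const_mul _) fun y' => by
      linarith [hcross v u y y']
  _ = k v y := by rw [integral_const_mul, hk.integral_eq_one, mul_one]

lemma bddAbove_of_crossRatioBound (hk : IsTransitionDensity ν k) {a : ℝ} (ha : 0 < a)
    (hcross : CrossRatioBound a k) (y : Y) : BddAbove (Set.range fun v => k v y) := by
  rcases isEmpty_or_nonempty V with _ | ⟨⟨v₀⟩⟩
  · simp only [Set.range_eq_empty, bddAbove_empty]
  · refine ⟨k v₀ y / a, Set.forall_mem_range.mpr fun v => ?_⟩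
    rw [le_div_iff₀' ha]
    exact hk.mul_le_of_crossRatioBound hcross v v₀ y

lemma integrable_mul_of_crossRatioBound (hk : IsTransitionDensity ν k) {a : ℝ} (ha : 0 < a)
    (hcross : CrossRatioBound a k) {f : V → ℝ} (hf : Integrable f μ) (y : Y) :
    Integrable (fun v => f v * k v y) μ := by
  obtain ⟨C, hC⟩ := hk.bddAbove_of_crossRatioBound ha hcross y
  refine hf.mul_bdd (c := C) (hk.measurable.of_uncurry_right).aestronglyMeasurable
    (.of_forall fun v => ?_)
  rw [Real.norm_of_nonneg (hk.nonneg v y)]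
  exact hC ⟨v, rfl⟩

end IsTransitionDensity

end TransitionDensity

section Iteration

variable {E : ℕ → Type*} [∀ i, MeasurableSpace (E i)] {μ : ∀ i, Measure (E i)}
  [∀ i, SFinite (μ i)] {k : ∀ i, E i → E (i + 1) → ℝ} {K : ∀ i, E 0 → E (i + 1) → ℝ}

lemma isTransitionDensity_of_succ_eq_compDensity (m : ℕ)
    (hk : ∀ i ≤ m, IsTransitionDensity (μ (i + 1)) (k i)) (hK0 : K 0 = k 0)
    (hKsucc : ∀ i < m, K (i + 1) = compDensity (μ (i + 1)) (K i) (k (i + 1))) :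
    IsTransitionDensity (μ (m + 1)) (K m) := by
  induction m with
  | zero => exact hK0 ▸ hk 0 le_rfl
  | succ m ih =>
    rw [hKsucc m m.lt_succ_self]
    exact (ih (fun i hi => hk i (by omega)) fun i hi => hKsucc i (by omega)).comp (hk _ le_rfl)

lemma minorBound_prod_of_succ_eq_compDensity (m : ℕ) {a : ℕ → ℝ} (ha : ∀ i ≤ m, 0 < a i)
    (hk : ∀ i ≤ m, IsTransitionDensity (μ (i + 1)) (k i))
    (hk_cross : ∀ i ≤ m, CrossRatioBound (a i) (k i)) (hK0 : K 0 = k 0)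
    (hKsucc : ∀ i < m, K (i + 1) = compDensity (μ (i + 1)) (K i) (k (i + 1))) :
    MinorBound (∏ i ∈ Finset.range (m + 1), (1 - a i) / (1 + a i)) (K m) := by
  induction m with
  | zero =>
    simpa only [zero_add, Finset.prod_range_one, hK0] using
      (hk_cross 0 le_rfl).minorBound (by linarith [ha 0 le_rfl])
  | succ m ih =>
    have hK : IsTransitionDensity (μ (m + 1)) (K m) :=
      isTransitionDensity_of_succ_eq_compDensity m (fun i hi => hk i (by omega)) hK0
        fun i hi => hKsucc i (by omega)
    have hK_minor : MinorBound (∏ i ∈ Finset.range (m + 1), (1 - a i) / (1 + a i)) (K m) :=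
      ih (fun i hi => ha i (by omega)) (fun i hi => hk i (by omega))
        (fun i hi => hk_cross i (by omega)) fun i hi => hKsucc i (by omega)
    have hk_minor : MinorBound ((1 - a (m + 1)) / (1 + a (m + 1))) (k (m + 1)) :=
      (hk_cross _ le_rfl).minorBound (by linarith [ha _ le_rfl])
    rw [hKsucc m m.lt_succ_self, Finset.prod_range_succ]
    exact hK_minor.comp hk_minor fun x =>
      (hk _ le_rfl).integrable_mul_of_crossRatioBound (ha _ le_rfl) (hk_cross _ le_rfl)
        (hK.integrable x)

theorem stmt5_general (m : ℕ) {a : ℕ → ℝ} (ha0 : ∀ i ≤ m, 0 < a i) (ha1 : ∀ i ≤ m, a i ≤ 1)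
    (hk : ∀ i ≤ m, IsTransitionDensity (μ (i + 1)) (k i))
    (hk_cross : ∀ i ≤ m, CrossRatioBound (a i) (k i)) (hK0 : K 0 = k 0)
    (hKsucc : ∀ i < m, K (i + 1) = compDensity (μ (i + 1)) (K i) (k (i + 1))) :
    CrossRatioBound ((1 - ∏ i ∈ Finset.range (m + 1), (1 - a i) / (1 + a i)) /
      (1 + ∏ i ∈ Finset.range (m + 1), (1 - a i) / (1 + a i))) (K m) := by
  have prod_nonneg : 0 ≤ ∏ i ∈ Finset.range (m + 1), (1 - a i) / (1 + a i) :=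
    Finset.prod_nonneg fun i hi => by
      have hi' : i ≤ m := by simpa [Nat.lt_succ_iff] using hi
      exact div_nonneg (by linarith [ha1 i hi']) (by linarith [ha0 i hi'])
  exact (minorBound_prod_of_succ_eq_compDensity m ha0 hk hk_cross hK0 hKsucc).crossRatioBound
    (by linarith)

end Iteration

lemma one_sub_mul_pow_le_div_pow {a : ℝ} (ha0 : 0 ≤ a) (ha1 : a ≤ 1) (m : ℕ) :
    1 - (1 - a) * (1 - a ^ 2) ^ m ≤
      (1 - ((1 - a) / (1 + a)) ^ (m + 1)) / (1 + ((1 - a) / (1 + a)) ^ (m + 1)) := by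
  set P := (1 + a) ^ (m + 1)
  set Q := (1 - a) ^ (m + 1) with hQ
  have P_pos : 0 < P := by positivity
  have Q_nonneg : 0 ≤ Q := pow_nonneg (by linarith) _
  have two_le : 2 ≤ P + Q := by
    have bernoulli_P := one_add_mul_le_pow (show -2 ≤ a by linarith) (m + 1)
    have bernoulli_Q := one_add_mul_le_pow (show -2 ≤ -a by linarith) (m + 1)
    rw [← sub_eq_add_neg] at bernoulli_Q
    linarith
  have factored : (1 - a) * (1 - a ^ 2) ^ m = Q * (1 + a) ^ m := by
    rw [show 1 - a ^ 2 = (1 - a) * (1 + a) by ring, mul_pow, hQ, pow_succ']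
    ring
  calc 1 - (1 - a) * (1 - a ^ 2) ^ m = 1 - Q * (1 + a) ^ m := by rw [factored]
    _ ≤ 1 - Q * 1 := by gcongr; exact one_le_pow₀ (by linarith)
    _ ≤ 1 - Q * (2 / (P + Q)) := by gcongr; exact (div_le_one (by linarith)).mpr two_le
    _ = (1 - Q / P) / (1 + Q / P) := by field_simp; ring
    _ = _ := by rw [div_pow]

/-- (Lemma 2.9 of the paper, abstract form.)  Given σ-finite measure spaces
`E 0, …, E (m+1)` and, for each `i ≤ m`, a positive probability transition density
`k i : E i → E (i+1) → (0,∞)` satisfying the cross-ratio bound with constant `a ∈ (0,1]`,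
the composed densities `K i : E 0 → E (i+1)` (with `K 0 = k 0` and
`K (i+1) (x,y) = ∫ K i (x,v) k (i+1) (v,y) μ_{i+1}(dv)`) satisfy the cross-ratio bound with
constant `a_n = 1 - (1-a) (1-a²)^m` (here `n = m + 1` kernels are composed). -/
theorem stmt5 (m : ℕ)
    (E : ℕ → Type*) [∀ i, MeasurableSpace (E i)]
    (μ : ∀ i, Measure (E i)) [∀ i, SigmaFinite (μ i)]
    (k : ∀ i : ℕ, E i → E (i + 1) → ℝ)
    (hk_meas : ∀ i, i ≤ m → Measurable (Function.uncurry (k i)))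
    (hk_pos : ∀ i, i ≤ m → ∀ x y, 0 < k i x y)
    (hk_int : ∀ i, i ≤ m → ∀ x, ∫ y, k i x y ∂(μ (i + 1)) = 1)
    (a : ℝ) (ha0 : 0 < a) (ha1 : a ≤ 1)
    (hk_cross : ∀ i, i ≤ m → ∀ (x₁ x₂ : E i) (y₁ y₂ : E (i + 1)),
      a * (k i x₁ y₂ * k i x₂ y₁) ≤ k i x₁ y₁ * k i x₂ y₂)
    (K : ∀ i : ℕ, E 0 → E (i + 1) → ℝ)
    (hK0 : ∀ x y, K 0 x y = k 0 x y)
    (hKsucc : ∀ i, i < m → ∀ x y,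
      K (i + 1) x y = ∫ v, K i x v * k (i + 1) v y ∂(μ (i + 1)))
    (x₁ x₂ : E 0) (y₁ y₂ : E (m + 1)) :
    (1 - (1 - a) * (1 - a ^ 2) ^ m) * (K m x₁ y₂ * K m x₂ y₁)
      ≤ K m x₁ y₁ * K m x₂ y₂ := by
  have hk (i : ℕ) (hi : i ≤ m) : IsTransitionDensity (μ (i + 1)) (k i) :=
    ⟨hk_meas i hi, fun x y => (hk_pos i hi x y).le, hk_int i hi⟩
  have hK0' : K 0 = k 0 := funext₂ hK0
  have hKsucc' (i : ℕ) (hi : i < m) : K (i + 1) = compDensity (μ (i + 1)) (K i) (k (i + 1)) :=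
    funext₂ (hKsucc i hi)
  have sharp := stmt5_general m (fun _ _ => ha0) (fun _ _ => ha1) hk hk_cross hK0' hKsucc'
  rw [Finset.prod_const, Finset.card_range] at sharp
  exact sharp.mono (one_sub_mul_pow_le_div_pow ha0.le ha1 m)
    (isTransitionDensity_of_succ_eq_compDensity m hk hK0' hKsucc').nonneg x₁ x₂ y₁ y₂
end

section
/- Let $Y_1,Y_2,Z_1,Z_2$ be real random variables on a common probability space such that $Z_1$ and $Z_2$ are independent. Let $c_1\in(0,1]$ and $c_2>0$ and assume: (i) $P(Z_2\in A) \ge c_1 P(Z_1\in A)$ for every Borel set $A\subset\mathbb{R}$; (ii) $P(Y_1-Y_2\ge c_2) < c_1/16$; (iii) $P(Z_2\in[v,v+c_2)) < c_1/8$ for every $v\in\mathbb{R}$. Then $P(Y_1+Z_1 < Y_2+Z_2) \ge c_1/8$. -/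
open MeasureTheory ProbabilityTheory

/-!
Let `v` be a median of `Z₁`. Domination gives `P(Z₂ ≥ v) ≥ c₁ / 2`, and since `Z₂` rarely falls in
`[v, v + c₂)`, most of this mass survives at `v + c₂`. By independence, `Z₁ ≤ v` and
`Z₂ ≥ v + c₂` hold together with probability at least half of what survives. On that event `Z₂`
leads `Z₁` by at least `c₂`, a gap that `Y₁ - Y₂` seldom cancels.
-/

section

open Set Function
open scoped ENNReal

theorem exists_leftLim_le_le_rightLim {α β : Type*}
    [ConditionallyCompleteLinearOrder α] [DenselyOrdered α] [NoMinOrder α] [NoMaxOrder α]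
    [TopologicalSpace α] [OrderTopology α]
    [ConditionallyCompleteLinearOrder β] [TopologicalSpace β] [OrderTopology β]
    {f : α → β} (hf : Monotone f) {a b : α} {p : β} (ha : f a ≤ p) (hb : p ≤ f b) :
    ∃ v, leftLim f v ≤ p ∧ p ≤ rightLim f v := by
  rcases ha.eq_or_lt with rfl | ha
  · exact ⟨a, hf.leftLim_le le_rfl, hf.le_rightLim le_rfl⟩
  have hbdd : BddBelow {x | p ≤ f x} := ⟨a, fun x hx ↦ (hf.reflect_lt (ha.trans_le hx)).le⟩
  refine ⟨sInf {x | p ≤ f x}, ?_, ?_⟩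
  · rw [hf.leftLim_eq_sSup]
    exact csSup_le (nonempty_Iio.image f) <| forall_mem_image.2 fun x hx ↦
      (lt_of_not_ge fun hpx ↦ hx.not_ge (csInf_le hbdd hpx)).le
  · rw [hf.rightLim_eq_sInf]
    refine le_csInf (nonempty_Ioi.image f) <| forall_mem_image.2 fun x hx ↦ ?_
    obtain ⟨y, hpy, hyx⟩ := exists_lt_of_csInf_lt ⟨b, hb⟩ hx
    exact hpy.trans (hf hyx.le)

theorem exists_ofReal_le_measure_Iic_Ici (ν : Measure ℝ) [IsProbabilityMeasure ν]
    {p : ℝ} (hp₀ : 0 < p) (hp₁ : p < 1) :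
    ∃ v, ENNReal.ofReal p ≤ ν (Iic v) ∧ ENNReal.ofReal (1 - p) ≤ ν (Ici v) := by
  obtain ⟨a, ha⟩ := ((tendsto_cdf_atBot ν).eventually_le_const hp₀).exists
  obtain ⟨b, hb⟩ := ((tendsto_cdf_atTop ν).eventually_const_le hp₁).exists
  obtain ⟨v, hleft, hright⟩ := exists_leftLim_le_le_rightLim (monotone_cdf ν) ha hb
  rw [(cdf ν).rightLim_eq] at hright
  have hIci : ν (Ici v) = ENNReal.ofReal (1 - leftLim (cdf ν) v) := by
    rw [← (cdf ν).measure_Ici (tendsto_cdf_atTop ν), measure_cdf]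
  refine ⟨v, ?_, ?_⟩
  · rw [← ofReal_cdf]
    gcongr
  · rw [hIci]
    gcongr

variable {Ω : Type*} [MeasurableSpace Ω] {μ : Measure Ω}

theorem exists_inv_two_le_measure_preimage_Iic_Ici [IsProbabilityMeasure μ] {X : Ω → ℝ}
    (hX : AEMeasurable X μ) :
    ∃ v, 2⁻¹ ≤ μ (X ⁻¹' Iic v) ∧ 2⁻¹ ≤ μ (X ⁻¹' Ici v) := by
  have := Measure.isProbabilityMeasure_map hX
  obtain ⟨v, hIic, hIci⟩ :=
    exists_ofReal_le_measure_Iic_Ici (μ.map X) (p := 2⁻¹) (by norm_num) (by norm_num)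
  have half : ENNReal.ofReal 2⁻¹ = 2⁻¹ := by
    rw [ENNReal.ofReal_inv_of_pos two_pos, ENNReal.ofReal_ofNat]
  rw [Measure.map_apply_of_aemeasurable hX measurableSet_Iic, half] at hIic
  rw [Measure.map_apply_of_aemeasurable hX measurableSet_Ici,
    show (1 - 2⁻¹ : ℝ) = 2⁻¹ by norm_num, half] at hIci
  exact ⟨v, hIic, hIci⟩

theorem measure_Iic_mul_measure_Ici_le_add {G : Type*} [AddCommGroup G] [LinearOrder G]
    [IsOrderedAddMonoid G] [TopologicalSpace G] [OrderClosedTopology G] [MeasurableSpace G]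
    [OpensMeasurableSpace G] (Y₁ Y₂ : Ω → G) {Z₁ Z₂ : Ω → G} (hindep : IndepFun Z₁ Z₂ μ) (v c : G) :
    μ (Z₁ ⁻¹' Iic v) * μ (Z₂ ⁻¹' Ici (v + c)) ≤
      μ {ω | c ≤ Y₁ ω - Y₂ ω} + μ {ω | Y₁ ω + Z₁ ω < Y₂ ω + Z₂ ω} := by
  rw [← hindep.measure_inter_preimage_eq_mul _ _ measurableSet_Iic measurableSet_Ici]
  refine (measure_mono ?_).trans (measure_union_le _ _)
  rintro ω ⟨hZ₁ : Z₁ ω ≤ v, hZ₂ : v + c ≤ Z₂ ω⟩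
  refine (le_or_gt c (Y₁ ω - Y₂ ω)).imp id fun hY ↦ ?_
  calc Y₁ ω + Z₁ ω < (c + Y₂ ω) + v := add_lt_add_of_lt_of_le (sub_lt_iff_lt_add.1 hY) hZ₁
    _ = Y₂ ω + (v + c) := by abel
    _ ≤ Y₂ ω + Z₂ ω := by gcongr

theorem exists_div_four_le_add_measure_Iic_mul_measure_Ici [IsProbabilityMeasure μ]
    {X Y : Ω → ℝ} (hX : AEMeasurable X μ) {c δ : ℝ≥0∞} {w : ℝ}
    (hdom : ∀ v, c * μ (X ⁻¹' Ici v) ≤ μ (Y ⁻¹' Ici v))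
    (hconc : ∀ v, μ (Y ⁻¹' Ico v (v + w)) ≤ δ) :
    ∃ v, c / 4 ≤ δ / 2 + μ (X ⁻¹' Iic v) * μ (Y ⁻¹' Ici (v + w)) := by
  obtain ⟨v, hIic, hIci⟩ := exists_inv_two_le_measure_preimage_Iic_Ici hX
  have hsplit : μ (Y ⁻¹' Ici v) ≤ δ + μ (Y ⁻¹' Ici (v + w)) :=
    calc μ (Y ⁻¹' Ici v) ≤ μ (Y ⁻¹' Ico v (v + w) ∪ Y ⁻¹' Ici (v + w)) :=
          measure_mono (preimage_mono Ici_subset_Ico_union_Ici)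
      _ ≤ μ (Y ⁻¹' Ico v (v + w)) + μ (Y ⁻¹' Ici (v + w)) := measure_union_le _ _
      _ ≤ δ + μ (Y ⁻¹' Ici (v + w)) := by gcongr; exact hconc v
  refine ⟨v, ?_⟩
  calc c / 4 = 2⁻¹ * (c * 2⁻¹) := by
        rw [div_eq_mul_inv, mul_left_comm, ← ENNReal.mul_inv (by simp) (by simp)]
        norm_num
    _ ≤ 2⁻¹ * (c * μ (X ⁻¹' Ici v)) := by gcongr
    _ ≤ 2⁻¹ * (δ + μ (Y ⁻¹' Ici (v + w))) := by gcongr; exact (hdom v).trans hsplit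
    _ = δ / 2 + 2⁻¹ * μ (Y ⁻¹' Ici (v + w)) := by rw [mul_add, mul_comm _ δ, div_eq_mul_inv]
    _ ≤ δ / 2 + μ (X ⁻¹' Iic v) * μ (Y ⁻¹' Ici (v + w)) := by gcongr

theorem stmt8_general [IsProbabilityMeasure μ] (Y₁ Y₂ : Ω → ℝ) {Z₁ Z₂ : Ω → ℝ}
    (hZ₁ : AEMeasurable Z₁ μ) (hindep : IndepFun Z₁ Z₂ μ) {c₁ c₂ δ ε : ℝ}
    (hδ : 0 ≤ δ) (hε : 0 ≤ ε)
    (hdom : ∀ v, ENNReal.ofReal c₁ * μ (Z₁ ⁻¹' Ici v) ≤ μ (Z₂ ⁻¹' Ici v))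
    (hdiff : μ {ω | c₂ ≤ Y₁ ω - Y₂ ω} ≤ ENNReal.ofReal ε)
    (hconc : ∀ v, μ (Z₂ ⁻¹' Ico v (v + c₂)) ≤ ENNReal.ofReal δ) :
    ENNReal.ofReal (c₁ / 4 - δ / 2 - ε) ≤ μ {ω | Y₁ ω + Z₁ ω < Y₂ ω + Z₂ ω} := by
  obtain ⟨v, hv⟩ := exists_div_four_le_add_measure_Iic_mul_measure_Ici hZ₁ hdom hconc
  rw [ENNReal.ofReal_sub _ hε, ENNReal.ofReal_sub _ (by positivity),
    ENNReal.ofReal_div_of_pos four_pos, ENNReal.ofReal_div_of_pos two_pos,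
    ENNReal.ofReal_ofNat, ENNReal.ofReal_ofNat, tsub_le_iff_left, tsub_le_iff_left]
  calc ENNReal.ofReal c₁ / 4
      ≤ ENNReal.ofReal δ / 2 + μ (Z₁ ⁻¹' Iic v) * μ (Z₂ ⁻¹' Ici (v + c₂)) := hv
    _ ≤ ENNReal.ofReal δ / 2 +
          (μ {ω | c₂ ≤ Y₁ ω - Y₂ ω} + μ {ω | Y₁ ω + Z₁ ω < Y₂ ω + Z₂ ω}) := by
        gcongr
        exact measure_Iic_mul_measure_Ici_le_add Y₁ Y₂ hindep v c₂
    _ ≤ ENNReal.ofReal δ / 2 +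
          (ENNReal.ofReal ε + μ {ω | Y₁ ω + Z₁ ω < Y₂ ω + Z₂ ω}) := by gcongr

end

/-- (Inequality (3.15) of the paper.)  If `Z₁, Z₂` are independent,
`c₁ ∈ (0,1]`, `c₂ > 0`, the law of `Z₂` dominates `c₁` times the law of `Z₁`,
`P(Y₁ - Y₂ ≥ c₂) < c₁/16`, and `P(Z₂ ∈ [v, v+c₂)) < c₁/8` for every `v`, then
`P(Y₁ + Z₁ < Y₂ + Z₂) ≥ c₁/8`. -/
theorem stmt8 {Ω : Type*} [MeasurableSpace Ω] (μ : Measure Ω) [IsProbabilityMeasure μ]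
    (Y₁ Y₂ Z₁ Z₂ : Ω → ℝ)
    (hY₁ : Measurable Y₁) (hY₂ : Measurable Y₂)
    (hZ₁ : Measurable Z₁) (hZ₂ : Measurable Z₂)
    (h_indep : IndepFun Z₁ Z₂ μ)
    (c₁ c₂ : ℝ) (hc₁0 : 0 < c₁) (hc₁1 : c₁ ≤ 1) (hc₂ : 0 < c₂)
    (h1 : ∀ A : Set ℝ, MeasurableSet A →
      ENNReal.ofReal c₁ * μ (Z₁ ⁻¹' A) ≤ μ (Z₂ ⁻¹' A))
    (h2 : μ {ω | c₂ ≤ Y₁ ω - Y₂ ω} < ENNReal.ofReal (c₁ / 16))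
    (h3 : ∀ v : ℝ, μ {ω | Z₂ ω ∈ Set.Ico v (v + c₂)} < ENNReal.ofReal (c₁ / 8)) :
    ENNReal.ofReal (c₁ / 8) ≤ μ {ω | Y₁ ω + Z₁ ω < Y₂ ω + Z₂ ω} := by
  convert stmt8_general Y₁ Y₂ hZ₁.aemeasurable h_indep (by positivity) (by positivity)
    (fun _ ↦ h1 _ measurableSet_Ici) h2.le (fun v ↦ (h3 v).le) using 2
  ring
end

section
/- Let $\rho\in(0,1)$, let $j:\mathbb{N}\to\mathbb{Z}$ be injective, and let $c:\mathbb{N}\to[0,\infty)$ be nonincreasing. Then $\sum_{i=0}^{\infty}\sum_{n=i}^{\infty} \rho^{|j(n)-j(i)|}\, c(i)\,c(n) \le \frac{1+\rho}{1-\rho}\,\sum_{i=0}^{\infty} c(i)^2$. -/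
/-!
The sum over `n ≥ i` is at most the sum over all pairs `(i, n)`. By AM-GM,
`c i * c n ≤ (c i ^ 2 + c n ^ 2) / 2`, so a quadratic form with nonnegative kernel is bounded by
`∑ c i ^ 2` times any common bound of the row and column sums of the kernel (as in Schur's test).
For the kernel `ρ ^ |j n - j i|` with `j` injective, each row and each column sums distinct terms
of the series `∑ m : ℤ, ρ ^ |m| = (1 + ρ) / (1 - ρ)`.
-/

open scoped ENNReal

theorem ennreal_two_mul_le_add_sq (a b : ℝ≥0∞) : 2 * (a * b) ≤ a ^ 2 + b ^ 2 := by
  induction a with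
  | top => simp
  | coe a =>
    induction b with
    | top => simp
    | coe b => exact_mod_cast mul_assoc 2 a b ▸ two_mul_le_add_sq a b

theorem two_mul_tsum_tsum_mul_le {ι κ : Type*} {K : ι → κ → ℝ≥0∞} {R S : ℝ≥0∞}
    (hrow : ∀ i, ∑' n, K i n ≤ R) (hcol : ∀ n, ∑' i, K i n ≤ S) (a : ι → ℝ≥0∞) (b : κ → ℝ≥0∞) :
    2 * ∑' i, ∑' n, K i n * (a i * b n) ≤ R * ∑' i, a i ^ 2 + S * ∑' n, b n ^ 2 := by
  have hrows : ∑' i, ∑' n, K i n * a i ^ 2 ≤ R * ∑' i, a i ^ 2 := by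
    simp_rw [ENNReal.tsum_mul_right, ← ENNReal.tsum_mul_left]
    gcongr with i
    exact hrow i
  have hcols : ∑' i, ∑' n, K i n * b n ^ 2 ≤ S * ∑' n, b n ^ 2 := by
    rw [ENNReal.tsum_comm]
    simp_rw [ENNReal.tsum_mul_right, ← ENNReal.tsum_mul_left]
    gcongr with n
    exact hcol n
  calc 2 * ∑' i, ∑' n, K i n * (a i * b n)
      = ∑' i, ∑' n, K i n * (2 * (a i * b n)) := by
        simp_rw [← ENNReal.tsum_mul_left, mul_left_comm]
    _ ≤ ∑' i, ∑' n, K i n * (a i ^ 2 + b n ^ 2) := by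
        gcongr with i n
        exact ennreal_two_mul_le_add_sq (a i) (b n)
    _ = ∑' i, ∑' n, K i n * a i ^ 2 + ∑' i, ∑' n, K i n * b n ^ 2 := by
        simp_rw [mul_add, ENNReal.tsum_add]
    _ ≤ R * ∑' i, a i ^ 2 + S * ∑' n, b n ^ 2 := add_le_add hrows hcols

theorem tsum_tsum_sub_mul_le_of_injective {ι G : Type*} [AddGroup G] (w : G → ℝ≥0∞)
    {j : ι → G} (hj : Function.Injective j) (c : ι → ℝ≥0∞) :
    ∑' i, ∑' n, w (j n - j i) * (c i * c n) ≤ (∑' g, w g) * ∑' i, c i ^ 2 := by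
  have hrow (i : ι) : ∑' n, w (j n - j i) ≤ ∑' g, w g :=
    ENNReal.tsum_comp_le_tsum_of_injective (sub_left_injective.comp hj) w
  have hcol (n : ι) : ∑' i, w (j n - j i) ≤ ∑' g, w g :=
    ENNReal.tsum_comp_le_tsum_of_injective (sub_right_injective.comp hj) w
  rw [← ENNReal.mul_le_mul_iff_right two_ne_zero ENNReal.ofNat_ne_top, two_mul (_ * _)]
  exact two_mul_tsum_tsum_mul_le hrow hcol c c

theorem hasSum_pow_natAbs_of_norm_lt_one {K : Type*} [NormedDivisionRing K] {ξ : K}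
    (hξ : ‖ξ‖ < 1) : HasSum (fun m : ℤ ↦ ξ ^ m.natAbs) ((1 + ξ) / (1 - ξ)) := by
  have hnonneg : HasSum (fun n : ℕ ↦ ξ ^ (n : ℤ).natAbs) (1 - ξ)⁻¹ := by
    simpa only [Int.natAbs_natCast] using hasSum_geometric_of_norm_lt_one hξ
  have hneg : HasSum (fun n : ℕ ↦ ξ ^ (-((n : ℤ) + 1)).natAbs) (ξ * (1 - ξ)⁻¹) := by
    have hnatAbs (n : ℕ) : (-((n : ℤ) + 1)).natAbs = n + 1 := by omega
    simpa only [hnatAbs, pow_succ'] using (hasSum_geometric_of_norm_lt_one hξ).mul_left ξ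
  rw [div_eq_mul_inv, add_mul, one_mul]
  exact HasSum.of_nat_of_neg_add_one (f := fun m : ℤ ↦ ξ ^ m.natAbs) hnonneg hneg

theorem tsum_ofReal_pow_natAbs {ρ : ℝ} (hρ0 : 0 ≤ ρ) (hρ1 : ρ < 1) :
    ∑' m : ℤ, ENNReal.ofReal (ρ ^ m.natAbs) = ENNReal.ofReal ((1 + ρ) / (1 - ρ)) := by
  have hsum := hasSum_pow_natAbs_of_norm_lt_one (Real.norm_of_nonneg hρ0 ▸ hρ1)
  rw [← hsum.tsum_eq, ENNReal.ofReal_tsum_of_nonneg (fun m ↦ pow_nonneg hρ0 _) hsum.summable]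

theorem stmt11_general {ι : Type*} {ρ : ℝ} (hρ0 : 0 ≤ ρ) (hρ1 : ρ < 1)
    {j : ι → ℤ} (hj : Function.Injective j) (c : ι → ℝ≥0∞) :
    ∑' i, ∑' n, ENNReal.ofReal (ρ ^ (j n - j i).natAbs) * (c i * c n)
      ≤ ENNReal.ofReal ((1 + ρ) / (1 - ρ)) * ∑' i, c i ^ 2 := by
  rw [← tsum_ofReal_pow_natAbs hρ0 hρ1]
  exact tsum_tsum_sub_mul_le_of_injective (fun m ↦ ENNReal.ofReal (ρ ^ m.natAbs)) hj c

/-- (Summation device of display (2.67) of the paper.)  For `ρ ∈ (0,1)`,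
an injective `j : ℕ → ℤ` and a nonincreasing `c : ℕ → [0,∞)`,
`∑_{i=0}^∞ ∑_{n=i}^∞ ρ^{|j(n)-j(i)|} c(i) c(n) ≤ ((1+ρ)/(1-ρ)) ∑_{i=0}^∞ c(i)²`
(the inner sum over `n ≥ i` is written via `n = i + k`). -/
theorem stmt11 (ρ : ℝ) (hρ0 : 0 < ρ) (hρ1 : ρ < 1)
    (j : ℕ → ℤ) (hj : Function.Injective j)
    (c : ℕ → ℝ) (hc0 : ∀ i, 0 ≤ c i) (hc_mono : Antitone c) :
    ∑' i : ℕ, ∑' k : ℕ,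
        ENNReal.ofReal (ρ ^ (j (i + k) - j i).natAbs * c i * c (i + k))
      ≤ ENNReal.ofReal ((1 + ρ) / (1 - ρ)) * ∑' i : ℕ, ENNReal.ofReal (c i ^ 2) := by
  simp_rw [mul_assoc, ENNReal.ofReal_mul (pow_nonneg hρ0.le _), ENNReal.ofReal_mul (hc0 _),
    ENNReal.ofReal_pow (hc0 _)]
  exact (ENNReal.tsum_le_tsum fun i ↦ ENNReal.tsum_comp_le_tsum_of_injective
    (add_right_injective i) _).trans (stmt11_general hρ0.le hρ1 hj fun i ↦ ENNReal.ofReal (c i))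
end
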